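/- Let f be a constraint of arity k ≥ 3 that is in simple form. If f has imp support and f ∉ ED, then there exists a constraint h of arity strictly less than k such that h has imp support, h ∉ ED, and h is T-constructible from f. -/

import Mathlib

/-- A (complex-valued Boolean) constraint of arity `k`. -/
abbrev Constraint (k : ℕ) : Type := (Fin k → Bool) → ℂ

/-- The binary equality constraint `EQ = [1,0,1]`, as a two-argument function. -/
def EQc : Bool → Bool → ℂ := fun a b => if a = b then 1 else 0

/-- The binary disequality constraint `XOR = [0,1,0]`, as a two-argument function. -/
def XORc : Bool → Bool → ℂ := fun a b => if a = b then 0 else 1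

/-- The binary constraint `Implies = (1,1,0,1)`, as a two-argument function. -/
def IMPc : Bool → Bool → ℂ := fun a b => if a = true ∧ b = false then 0 else 1

/-- The unary constraint `[a, b]` (value `a` on input `0`, value `b` on input `1`). -/
def unC (a b : ℂ) : Constraint 1 := fun x => if x 0 then b else a

/-- The binary constraint `(a,b,c,d) = (f(0,0), f(0,1), f(1,0), f(1,1))`. -/
def binC (a b c d : ℂ) : Constraint 2 := fun x =>
  if x 0 then (if x 1 then d else c) else (if x 1 then b else a)

/-- `OR = [0,1,1]`. -/
def ORc : Constraint 2 := binC 0 1 1 1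

/-- `Implies = (1,1,0,1)` as a binary constraint. -/
def Impliesc : Constraint 2 := binC 1 1 0 1

/-- Membership in `NZ`: the constraint is everywhere nonzero. -/
def inNZ {k : ℕ} (f : Constraint k) : Prop := ∀ x, f x ≠ 0

/-- Membership in `DG`: the constraint is a product of unary constraints, one per variable. -/
def inDG {k : ℕ} (f : Constraint k) : Prop :=
  ∃ g : Fin k → Bool → ℂ, ∀ x, f x = ∏ i, g i (x i)

/-- Membership in `ED`: the constraint is a product of at least one factor, each factor
being a unary constraint applied to some variable, or `EQ`/`XOR` applied to two variables. -/
def inED {k : ℕ} (f : Constraint k) : Prop :=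
  ∃ (l1 l2 : ℕ) (h : Fin l1 → Bool → ℂ) (j : Fin l1 → Fin k)
    (g : Fin l2 → Bool → Bool → ℂ) (m n : Fin l2 → Fin k),
    1 ≤ l1 + l2 ∧ (∀ i, g i = EQc ∨ g i = XORc) ∧
    ∀ x, f x = (∏ i, h i (x (j i))) * ∏ i, g i (x (m i)) (x (n i))

/-- Membership in `IM`: `f ∉ NZ` and `f` is a product of at least one factor, each factor
being a unary constraint applied to some variable, or `Implies` applied to two variables. -/
def inIM {k : ℕ} (f : Constraint k) : Prop :=
  ¬ inNZ f ∧
  ∃ (l1 l2 : ℕ) (h : Fin l1 → Bool → ℂ) (j : Fin l1 → Fin k)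
    (m n : Fin l2 → Fin k),
    1 ≤ l1 + l2 ∧
    ∀ x, f x = (∏ i, h i (x (j i))) * ∏ i, IMPc (x (m i)) (x (n i))

/-- The underlying relation `R_f = {x : f x ≠ 0}` of a constraint `f`. -/
def relOf {k : ℕ} (f : Constraint k) : Set (Fin k → Bool) := {x | f x ≠ 0}

/-- Factors allowed in an IMP-style factorization of a relation:
`Δ_c(x_i)` or `Implies(x_i, x_j)`. -/
inductive ImpFactor (k : ℕ) where
  | delta (c : Bool) (i : Fin k)
  | imp (i j : Fin k)
deriving DecidableEq

/-- Evaluation of an IMP-factor at an assignment. -/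
def ImpFactor.eval {k : ℕ} : ImpFactor k → (Fin k → Bool) → Bool
  | .delta c i, x => x i == c
  | .imp i j, x => !(x i) || x j

/-- `L` is a factor list for the relation `R`: the conjunction of the factors in `L` equals `R`. -/
def isFactorListFor {k : ℕ} (L : List (ImpFactor k)) (R : Set (Fin k → Bool)) : Prop :=
  ∀ x, x ∈ R ↔ ∀ fac ∈ L, fac.eval x = true

/-- Membership in `IMP`: the relation is the conjunction of a positive number of factors of the
forms `Δ_0(x)`, `Δ_1(x)`, `Implies(x,y)`. -/
def inIMP {k : ℕ} (R : Set (Fin k → Bool)) : Prop :=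
  ∃ L : List (ImpFactor k), L ≠ [] ∧ isFactorListFor L R

/-- `f` has imp support when `R_f ∈ IMP`. -/
def hasImpSupport {k : ℕ} (f : Constraint k) : Prop := inIMP (relOf f)

/-- A factor list is imp-distinctive if no variable occurs both in a `Δ_c` factor and in an
`Implies` factor, and no factor `Implies(x,x)` occurs. -/
def impDistinctive {k : ℕ} (L : List (ImpFactor k)) : Prop :=
  (∀ i : Fin k, ¬ ((∃ c, ImpFactor.delta c i ∈ L) ∧
      (∃ j, ImpFactor.imp i j ∈ L ∨ ImpFactor.imp j i ∈ L))) ∧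
  (∀ i : Fin k, ImpFactor.imp i i ∉ L)

/-- Factors of the forms `Δ_c(x_i)` or `EQ(x_i,x_j)`. -/
inductive EqFactor (k : ℕ) where
  | delta (c : Bool) (i : Fin k)
  | eq (i j : Fin k)
deriving DecidableEq

/-- Evaluation of such a factor at an assignment. -/
def EqFactor.eval {k : ℕ} : EqFactor k → (Fin k → Bool) → Bool
  | .delta c i, x => x i == c
  | .eq i j, x => x i == x j

/-- `f` is in simple form: its representing Boolean matrix (rows indexed by `R_f`) has
no all-`0` column, no all-`1` column, and no two identical columns. -/
def simpleForm {k : ℕ} (f : Constraint k) : Prop :=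
  (∀ i : Fin k, ∃ a, f a ≠ 0 ∧ a i = true) ∧
  (∀ i : Fin k, ∃ a, f a ≠ 0 ∧ a i = false) ∧
  (∀ i j : Fin k, i ≠ j → ∃ a, f a ≠ 0 ∧ a i ≠ a j)

/-- A constraint of unspecified arity. -/
abbrev Ctr : Type := Σ k : ℕ, Constraint k

/-- T-constructibility of a constraint from a set `G` of constraints, by finitely many
applications of permutation, pinning, projection, linking, expansion, multiplication,
and normalization. -/
inductive TCon (G : Set Ctr) : Ctr → Prop where
  | base {c : Ctr} : c ∈ G → TCon G c
  | perm {k : ℕ} {g : Constraint k} (σ : Equiv.Perm (Fin k)) :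
      TCon G ⟨k, g⟩ → TCon G ⟨k, fun x => g (fun i => x (σ i))⟩
  | pinning {k : ℕ} {g : Constraint (k+1)} (i : Fin (k+1)) (c : Bool) :
      TCon G ⟨k+1, g⟩ → TCon G ⟨k, fun x => g (i.insertNth c x)⟩
  | proj {k : ℕ} {g : Constraint (k+1)} (i : Fin (k+1)) :
      TCon G ⟨k+1, g⟩ →
      TCon G ⟨k, fun x => g (i.insertNth false x) + g (i.insertNth true x)⟩
  | link {k : ℕ} {g : Constraint (k+1)} (i : Fin (k+1)) (j : Fin k) :
      TCon G ⟨k+1, g⟩ → TCon G ⟨k, fun x => g (i.insertNth (x j) x)⟩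
  | expand {k : ℕ} {g : Constraint k} (i : Fin (k+1)) :
      TCon G ⟨k, g⟩ → TCon G ⟨k+1, fun x => g (fun j => x (i.succAbove j))⟩
  | mul {k : ℕ} {g₁ g₂ : Constraint k} :
      TCon G ⟨k, g₁⟩ → TCon G ⟨k, g₂⟩ → TCon G ⟨k, fun x => g₁ x * g₂ x⟩
  | norm {k : ℕ} {g : Constraint k} (lam : ℂ) (hlam : lam ≠ 0) :
      TCon G ⟨k, g⟩ → TCon G ⟨k, fun x => lam * g x⟩

/-- T-constructibility using no projection operation. -/
inductive TConNoProj (G : Set Ctr) : Ctr → Prop where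
  | base {c : Ctr} : c ∈ G → TConNoProj G c
  | perm {k : ℕ} {g : Constraint k} (σ : Equiv.Perm (Fin k)) :
      TConNoProj G ⟨k, g⟩ → TConNoProj G ⟨k, fun x => g (fun i => x (σ i))⟩
  | pinning {k : ℕ} {g : Constraint (k+1)} (i : Fin (k+1)) (c : Bool) :
      TConNoProj G ⟨k+1, g⟩ → TConNoProj G ⟨k, fun x => g (i.insertNth c x)⟩
  | link {k : ℕ} {g : Constraint (k+1)} (i : Fin (k+1)) (j : Fin k) :
      TConNoProj G ⟨k+1, g⟩ → TConNoProj G ⟨k, fun x => g (i.insertNth (x j) x)⟩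
  | expand {k : ℕ} {g : Constraint k} (i : Fin (k+1)) :
      TConNoProj G ⟨k, g⟩ → TConNoProj G ⟨k+1, fun x => g (fun j => x (i.succAbove j))⟩
  | mul {k : ℕ} {g₁ g₂ : Constraint k} :
      TConNoProj G ⟨k, g₁⟩ → TConNoProj G ⟨k, g₂⟩ →
      TConNoProj G ⟨k, fun x => g₁ x * g₂ x⟩
  | norm {k : ℕ} {g : Constraint k} (lam : ℂ) (hlam : lam ≠ 0) :
      TConNoProj G ⟨k, g⟩ → TConNoProj G ⟨k, fun x => lam * g x⟩

/-- Pinning the `i`-th variable of `f` to the bit `c`. -/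
def pinC {k : ℕ} (f : Constraint (k+1)) (i : Fin (k+1)) (c : Bool) : Constraint k :=
  fun x => f (i.insertNth c x)

/-- `R_f` admits a good factor list: a factor list consisting only of `Implies` factors,
in which every variable is incident to at least one edge of the induced imp graph,
and whose imp graph has no (directed) cycle. -/
def hasGoodFactorList {k : ℕ} (f : Constraint k) : Prop :=
  ∃ L : List (ImpFactor k),
    isFactorListFor L (relOf f) ∧
    (∀ fac ∈ L, ∃ i j, fac = ImpFactor.imp i j) ∧
    (∀ i : Fin k, ∃ j, ImpFactor.imp i j ∈ L ∨ ImpFactor.imp j i ∈ L) ∧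
    ¬ ∃ i : Fin k, Relation.TransGen (fun a b => ImpFactor.imp a b ∈ L) i i

/-! The support `R` of `f` is a sublattice of `{0,1}^k`, so a chain `a ≤ b ≤ c` in `R` yields a
binary constraint `h` with `h(0,0) = f a`, `h(0,1) = f b`, `h(1,1) = f c` and
`h(1,0) = f (a ⊔ c \ b)` by pinning and linking. Such an `h` has imp support, and it lies in `ED`
only if `f a * f c = f b * f (a ⊔ c \ b)`. If this identity held for every chain, then `R` would be
relatively complemented, hence a Boolean algebra, and `f` would be multiplicative over its atoms. An
atom turns on one class of equal columns of `R`, so `f` would be a product of unary weights,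
pinnings of the constant columns and equalities between equal columns, that is, a member of
`ED`. -/

section Multiplicativity

variable {ι M : Type*} [CommGroupWithZero M]

/-- Multiplicativity of `f` along the chains of its support: the values at `b` and at its complement
in the interval `[a, c]` multiply to the product of the values at the endpoints. This is what
membership in `ED` of all binary restrictions of `f` along chains amounts to. -/
def ChainMultiplicative (f : (ι → Bool) → M) : Prop :=
  ∀ ⦃a b c⦄, a ≤ b → b ≤ c → f a ≠ 0 → f b ≠ 0 → f c ≠ 0 → f a * f c = f b * f (a ⊔ c \ b)

/-- `x` satisfies every constraint of the form `x i = c` or `x i = x j` that holds throughout `R`: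
in terms of the Boolean matrix whose rows are the elements of `R`, it respects the constant columns
and the pairs of equal columns. -/
def RespectsColumns (R : Set (ι → Bool)) (x : ι → Bool) : Prop :=
  (∀ i c, (∀ r ∈ R, r i = c) → x i = c) ∧ ∀ i j, (∀ r ∈ R, r i = r j) → x i = x j

theorem respectsColumns_of_mem {R : Set (ι → Bool)} {x : ι → Bool} (hx : x ∈ R) :
    RespectsColumns R x :=
  ⟨fun _ _ h => h x hx, fun _ _ h => h x hx⟩

theorem RespectsColumns.exists_eq_true {R : Set (ι → Bool)} {x : ι → Bool} {i : ι}
    (hx : RespectsColumns R x) (hxi : x i = true) : ∃ r ∈ R, r i = true := by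
  by_contra! h
  simpa [hxi] using hx.1 i false fun r hr => by simpa using h r hr

theorem RespectsColumns.sup_sdiff {R : Set (ι → Bool)} {x y z : ι → Bool}
    (hx : RespectsColumns R x) (hy : RespectsColumns R y) (hz : z ∈ R) :
    RespectsColumns R (z ⊔ x \ y) := by
  refine ⟨fun i c h => ?_, fun i j h => ?_⟩
  · simp only [Pi.sup_apply, Pi.sdiff_apply, hx.1 i c h, hy.1 i c h, h z hz, sdiff_self,
      sup_bot_eq]
  · simp only [Pi.sup_apply, Pi.sdiff_apply, hx.2 i j h, hy.2 i j h, h z hz]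

theorem exists_isLeast_of_infClosed {α : Type*} [SemilatticeInf α] {s : Set α}
    (hs : InfClosed s) (hfin : s.Finite) (hne : s.Nonempty) : ∃ a, IsLeast s a := by
  obtain ⟨a, ha⟩ := hfin.exists_minimal hne
  exact ⟨a, ha.prop, fun b hb => (ha.le_of_le (hs ha.prop hb) inf_le_left).trans inf_le_right⟩

/-- A choice, for each column that is not identically false, of the least element of `R` that is
true there. -/
def IsColumnAtoms (R : Set (ι → Bool)) (A : ι → ι → Bool) : Prop :=
  ∀ i, (∃ r ∈ R, r i = true) → IsLeast {r ∈ R | r i = true} (A i)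

theorem exists_isColumnAtoms [Finite ι] {R : Set (ι → Bool)} (hR : InfClosed R) :
    ∃ A, IsColumnAtoms R A := by
  have hleast (i : ι) : ∃ a, (∃ r ∈ R, r i = true) → IsLeast {r ∈ R | r i = true} a := by
    by_cases h : ∃ r ∈ R, r i = true
    · have hclosed : InfClosed {r ∈ R | r i = true} :=
        fun r hr s hs => ⟨hR hr.1 hs.1, by simp [hr.2, hs.2]⟩
      exact (exists_isLeast_of_infClosed hclosed (Set.toFinite _) h).imp fun _ ha _ => ha
    · exact ⟨⊥, fun h' => absurd h' h⟩
  choose A hA using hleast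
  exact ⟨A, hA⟩

/-- A transversal of the classes of equal columns. -/
def IsColumnTransversal (R : Set (ι → Bool)) (T : Finset ι) : Prop :=
  (∀ j, ∃ i ∈ T, ∀ r ∈ R, r i = r j) ∧ ∀ i ∈ T, ∀ j ∈ T, (∀ r ∈ R, r i = r j) → i = j

theorem exists_isColumnTransversal [Finite ι] (R : Set (ι → Bool)) :
    ∃ T, IsColumnTransversal R T := by
  obtain ⟨S, himage, hinj⟩ :=
    Set.exists_image_eq_and_injOn Set.univ fun (i : ι) (r : R) => (r : ι → Bool) i
  refine ⟨S.toFinite.toFinset, fun j => ?_, fun i hi j hj h => ?_⟩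
  · obtain ⟨i, hi, hij⟩ := himage.symm ▸ Set.mem_image_of_mem _ (Set.mem_univ j)
    exact ⟨i, by simpa using hi, fun r hr => congrFun hij ⟨r, hr⟩⟩
  · exact hinj (by simpa using hi) (by simpa using hj) (funext fun r => h r r.2)

variable {f : (ι → Bool) → M} {A : ι → ι → Bool} {m : ι → Bool} {i j : ι}

theorem RespectsColumns.least_le {R : Set (ι → Bool)} (hm : IsLeast R m) {x : ι → Bool}
    (hx : RespectsColumns R x) : m ≤ x :=
  fun j hmj => hx.1 j true fun _ hr => hm.2 hr j hmj

theorem ChainMultiplicative.sup_sdiff_ne_zero (hf : ChainMultiplicative f) {a b c : ι → Bool}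
    (hab : a ≤ b) (hbc : b ≤ c) (ha : f a ≠ 0) (hb : f b ≠ 0) (hc : f c ≠ 0) :
    f (a ⊔ c \ b) ≠ 0 :=
  right_ne_zero_of_mul (hf hab hbc ha hb hc ▸ mul_ne_zero ha hc)

section

variable (hf : ChainMultiplicative f) (hR : IsSublattice f.support) (hm : IsLeast f.support m)
  (hA : IsColumnAtoms f.support A)
include hf hR hm hA

/-- The relative complement of `A i ⊓ r` in `[m, A i]` is true at `i`, so it is above `A i`. -/
theorem columnAtom_inf_le (hi : ∃ r ∈ f.support, r i = true) {r : ι → Bool}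
    (hr : r ∈ f.support) (hri : r i = false) : A i ⊓ r ≤ m := by
  obtain ⟨⟨hAR, hAi⟩, hleast⟩ := hA i hi
  have hinf : A i ⊓ r ∈ f.support := hR.infClosed hAR hr
  have hcompl : A i ≤ m ⊔ A i \ (A i ⊓ r) :=
    hleast ⟨hf.sup_sdiff_ne_zero (hm.2 hinf) inf_le_left hm.1 hinf hAR,
      by simp [hAi, hri, sdiff_eq]⟩
  calc A i ⊓ r ≤ (m ⊔ A i \ (A i ⊓ r)) ⊓ (A i ⊓ r) :=
        le_inf (inf_le_left.trans hcompl) le_rfl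
    _ = m ⊓ (A i ⊓ r) := by rw [inf_sup_right, inf_sdiff_self_left, sup_bot_eq]
    _ ≤ m := inf_le_left

theorem columns_eq_of_columnAtom (hi : ∃ r ∈ f.support, r i = true) (hAj : A i j = true)
    (hmj : m j = false) : ∀ r ∈ f.support, r i = r j := by
  intro r hr
  cases hri : r i with
  | true => exact ((hA i hi).2 ⟨hr, hri⟩ j hAj).symm
  | false => simpa [hAj, hmj, Bool.le_iff_imp] using columnAtom_inf_le hf hR hm hA hi hr hri j

theorem columnAtom_le (hi : ∃ r ∈ f.support, r i = true) {x : ι → Bool}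
    (hx : RespectsColumns f.support x) (hxi : x i = true) : A i ≤ x := by
  intro j hAj
  cases hmj : m j with
  | true => exact hx.least_le hm j hmj
  | false => rw [← hxi, hx.2 i j (columns_eq_of_columnAtom hf hR hm hA hi hAj hmj)]

theorem sup_sdiff_columnAtom_apply (hi : ∃ r ∈ f.support, r i = true) {x : ι → Bool}
    (hx : RespectsColumns f.support x) (hij : ¬ ∀ r ∈ f.support, r i = r j) :
    (m ⊔ x \ A i) j = x j := by
  cases hmj : m j with
  | true =>
    have hxj : x j = true := hx.least_le hm j hmj
    simp [hmj, hxj]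
  | false =>
    have hAj : A i j = false :=
      Bool.eq_false_iff.2 fun h => hij (columns_eq_of_columnAtom hf hR hm hA hi h hmj)
    simp [hmj, hAj, sdiff_eq]

theorem mul_apply_eq_columnAtom_mul (hi : ∃ r ∈ f.support, r i = true) {x : ι → Bool}
    (hx : RespectsColumns f.support x) (hxi : x i = true) (hx' : f (m ⊔ x \ A i) ≠ 0) :
    f m * f x = f (A i) * f (m ⊔ x \ A i) := by
  have hAR : A i ∈ f.support := (hA i hi).1.1
  have hAx : A i ≤ x := columnAtom_le hf hR hm hA hi hx hxi
  have hmx : m ≤ x := (hm.2 hAR).trans hAx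
  have hjoin : m ⊔ x \ A i ⊔ A i = x := by
    rw [sup_assoc, sdiff_sup_cancel hAx, sup_eq_right.2 hmx]
  have hxR : f x ≠ 0 := hjoin ▸ hR.supClosed hx' hAR
  exact hf (hm.2 hAR) hAx hm.1 hAR hxR

end

/-- The factor by which switching on the columns equal to the `i`-th one multiplies `f`. The value
at `true` is meaningless when the `i`-th column is identically false. -/
def columnWeight (f : (ι → Bool) → M) (m : ι → Bool) (A : ι → ι → Bool) (i : ι) (b : Bool) : M :=
  if b then f (A i) / f m else 1

theorem columnWeight_ne_zero (hm : IsLeast f.support m) (hA : IsColumnAtoms f.support A)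
    {x : ι → Bool} (hx : RespectsColumns f.support x) (i : ι) :
    columnWeight f m A i (x i) ≠ 0 := by
  cases hxi : x i with
  | false => exact one_ne_zero
  | true => exact div_ne_zero (hA i (hx.exists_eq_true hxi)).1.1 hm.1

theorem prod_columnWeight_least {T : Finset ι} (hm : IsLeast f.support m)
    (hA : IsColumnAtoms f.support A) : ∏ i ∈ T, columnWeight f m A i (m i) = 1 := by
  refine Finset.prod_eq_one fun i _ => ?_
  cases hmi : m i with
  | false => rfl
  | true =>
    have hAm : A i = m := (hA i ⟨m, hm.1, hmi⟩).unique ⟨⟨hm.1, hmi⟩, fun r hr => hm.2 hr.1⟩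
    rw [columnWeight, if_pos rfl, hAm, div_self hm.1]

theorem RespectsColumns.eq_least {T : Finset ι} (hT : IsColumnTransversal f.support T)
    (hm : IsLeast f.support m) {x : ι → Bool} (hx : RespectsColumns f.support x)
    (hxm : ∀ i ∈ T, x i = true → m i = true) : x = m := by
  refine le_antisymm (fun j hxj => ?_) (hx.least_le hm)
  obtain ⟨i, hiT, hij⟩ := hT.1 j
  rw [← hij m hm.1]
  exact hxm i hiT (hx.2 i j hij ▸ hxj)

theorem sup_sdiff_columnAtom_lt (hm : IsLeast f.support m) (hA : IsColumnAtoms f.support A)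
    {x : ι → Bool} (hx : RespectsColumns f.support x) (hxi : x i = true) (hmi : m i = false) :
    m ⊔ x \ A i < x := by
  have hAi : A i i = true := (hA i (hx.exists_eq_true hxi)).1.2
  refine (sup_le (hx.least_le hm) sdiff_le).lt_of_ne fun h => ?_
  simpa [hmi, hAi, hxi] using congrFun h i

theorem prod_columnWeight_eq_mul {T : Finset ι}
    (hf : ChainMultiplicative f) (hR : IsSublattice f.support) (hm : IsLeast f.support m)
    (hA : IsColumnAtoms f.support A) (hT : IsColumnTransversal f.support T) (hiT : i ∈ T)
    {x : ι → Bool} (hx : RespectsColumns f.support x) (hxi : x i = true) (hmi : m i = false) :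
    ∏ j ∈ T, columnWeight f m A j (x j) =
      f (A i) / f m * ∏ j ∈ T, columnWeight f m A j ((m ⊔ x \ A i) j) := by
  classical
  have hi : ∃ r ∈ f.support, r i = true := hx.exists_eq_true hxi
  have hx'i : (m ⊔ x \ A i) i = false := by simp [hmi, (hA i hi).1.2]
  rw [← Finset.mul_prod_erase T _ hiT, ← Finset.mul_prod_erase T _ hiT, hx'i, hxi]
  simp only [columnWeight, if_true, Bool.false_eq_true, if_false, one_mul]
  congr 1
  refine Finset.prod_congr rfl fun j hj => ?_
  obtain ⟨hji, hjT⟩ := Finset.mem_erase.1 hj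
  rw [sup_sdiff_columnAtom_apply hf hR hm hA hi hx fun h => hji (hT.2 i hiT j hjT h).symm]

theorem ChainMultiplicative.eq_mul_prod_columnWeight [Finite ι] {T : Finset ι}
    (hf : ChainMultiplicative f) (hR : IsSublattice f.support) (hm : IsLeast f.support m)
    (hA : IsColumnAtoms f.support A) (hT : IsColumnTransversal f.support T) {x : ι → Bool}
    (hx : RespectsColumns f.support x) : f x = f m * ∏ i ∈ T, columnWeight f m A i (x i) := by
  classical
  induction x using WellFoundedLT.induction with
  | ind x ih =>
  by_cases hxm : ∀ i ∈ T, x i = true → m i = true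
  · rw [hx.eq_least hT hm hxm, prod_columnWeight_least hm hA, mul_one]
  push Not at hxm
  obtain ⟨i, hiT, hxi, hmi⟩ := hxm
  replace hmi := Bool.eq_false_iff.2 hmi
  have hi : ∃ r ∈ f.support, r i = true := hx.exists_eq_true hxi
  have hx' : RespectsColumns f.support (m ⊔ x \ A i) :=
    hx.sup_sdiff (respectsColumns_of_mem (hA i hi).1.1) hm.1
  have hval := ih _ (sup_sdiff_columnAtom_lt hm hA hx hxi hmi) hx'
  have hne : f (m ⊔ x \ A i) ≠ 0 :=
    hval ▸ mul_ne_zero hm.1 (Finset.prod_ne_zero_iff.2 fun j _ => columnWeight_ne_zero hm hA hx' j)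
  have hmul := mul_apply_eq_columnAtom_mul hf hR hm hA hi hx hxi hne
  calc f x = f (A i) / f m * f (m ⊔ x \ A i) := by
        rw [div_mul_eq_mul_div, ← hmul, mul_div_cancel_left₀ _ hm.1]
    _ = f m * ∏ j ∈ T, columnWeight f m A j (x j) := by
        rw [hval, prod_columnWeight_eq_mul hf hR hm hA hT hiT hx hxi hmi, mul_left_comm]

end Multiplicativity

section Substitution

/-- `θ` is a simultaneous substitution of constants and variables: each coordinate of `θ x` is a
constant or a coordinate of `x`. -/
def IsSubstitution {n k : ℕ} (θ : (Fin n → Bool) → Fin k → Bool) : Prop :=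
  ∀ t, (∃ c, ∀ x, θ x t = c) ∨ ∃ i, ∀ x, θ x t = x i

variable {G : Set Ctr} {n k : ℕ}

theorem TConNoProj.toTCon {c : Ctr} (h : TConNoProj G c) : TCon G c := by
  induction h with
  | base h => exact .base h
  | perm σ _ ih => exact .perm σ ih
  | pinning i c _ ih => exact .pinning i c ih
  | link i j _ ih => exact .link i j ih
  | expand i _ ih => exact .expand i ih
  | mul _ _ ih₁ ih₂ => exact .mul ih₁ ih₂
  | norm lam hlam _ ih => exact .norm lam hlam ih

theorem TConNoProj.reindex {g : Constraint k} (e : Fin k ≃ Fin n) (hg : TConNoProj G ⟨k, g⟩) :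
    TConNoProj G ⟨n, fun x => g (x ∘ e)⟩ := by
  obtain rfl : k = n := Fin.equiv_iff_eq.1 ⟨e⟩
  exact hg.perm e

theorem TConNoProj.comp_castAdd {g : Constraint k} (hg : TConNoProj G ⟨k, g⟩) (n : ℕ) :
    TConNoProj G ⟨k + n, fun x => g (x ∘ Fin.castAdd n)⟩ := by
  induction n with
  | zero => exact hg
  | succ n ih =>
    have hexpand := ih.expand (Fin.last (k + n))
    simp only [Fin.succAbove_last] at hexpand
    exact hexpand

theorem TConNoProj.comp_natAdd {g : Constraint k} (hg : TConNoProj G ⟨k, g⟩) (n : ℕ) :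
    TConNoProj G ⟨n + k, fun x => g (x ∘ Fin.natAdd n)⟩ := by
  simpa only [Function.comp_def, finAddFlip_apply_castAdd] using
    (hg.comp_castAdd n).reindex finAddFlip

theorem TConNoProj.comp_append {g : Constraint (n + k)} (hg : TConNoProj G ⟨n + k, g⟩)
    {θ : (Fin n → Bool) → Fin k → Bool} (hθ : IsSubstitution θ) :
    TConNoProj G ⟨n, fun x => g (Fin.append x (θ x))⟩ := by
  induction k with
  | zero =>
    have happend (x : Fin n → Bool) : Fin.append x (θ x) = x := funext (Fin.append_left x (θ x))
    simp only [happend]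
    exact hg
  | succ k ih =>
    have hθ' : IsSubstitution fun x t => θ x (Fin.castSucc t) := fun t => hθ _
    have hsplit (x : Fin n → Bool) : Fin.append x (θ x) = (Fin.last (n + k)).insertNth
        (θ x (Fin.last k)) (Fin.append x fun t => θ x t.castSucc) := by
      rw [Fin.insertNth_last', ← Fin.append_snoc]
      exact congrArg _ (Fin.snoc_init_self (θ x)).symm
    rcases hθ (Fin.last k) with ⟨c, hc⟩ | ⟨i, hi⟩
    · simpa only [hsplit, hc] using ih (hg.pinning (Fin.last (n + k)) c) hθ'
    · simpa only [hsplit, hi, Fin.append_left] using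
        ih (hg.link (Fin.last (n + k)) (Fin.castAdd k i)) hθ'

/-- Dummy copies of the new variables are adjoined first, since linking can only identify a variable
with one that is still present. -/
theorem TConNoProj.comp_substitution {g : Constraint k} (hg : TConNoProj G ⟨k, g⟩)
    {θ : (Fin n → Bool) → Fin k → Bool} (hθ : IsSubstitution θ) :
    TConNoProj G ⟨n, fun x => g (θ x)⟩ := by
  simpa only [Function.comp_def, Fin.append_right] using (hg.comp_natAdd n).comp_append hθ

end Substitution

section EqualityDisequality

/-- The factors of which `ED` consists of all nonempty products. -/
inductive IsEDFactor {k : ℕ} : Constraint k → Prop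
  | unary (u : Bool → ℂ) (i : Fin k) : IsEDFactor fun x => u (x i)
  | eq (i j : Fin k) : IsEDFactor fun x => EQc (x i) (x j)
  | xor (i j : Fin k) : IsEDFactor fun x => XORc (x i) (x j)

variable {k : ℕ}

theorem inED.mul {f g : Constraint k} (hf : inED f) (hg : inED g) : inED (f * g) := by
  obtain ⟨p, q, u, i, b, m, n, hpq, hb, hf⟩ := hf
  obtain ⟨p', q', u', i', b', m', n', -, hb', hg⟩ := hg
  refine ⟨p + p', q + q', Fin.append u u', Fin.append i i', Fin.append b b', Fin.append m m',
    Fin.append n n', by omega, Fin.addCases (by simpa using hb) (by simpa using hb'), fun x => ?_⟩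
  simp only [Pi.mul_apply, hf, hg, Fin.prod_univ_add, Fin.append_left, Fin.append_right]
  exact mul_mul_mul_comm _ _ _ _

theorem IsEDFactor.inED {f : Constraint k} (hf : IsEDFactor f) : inED f := by
  cases hf with
  | unary u i =>
    exact ⟨1, 0, fun _ => u, fun _ => i, Fin.elim0, Fin.elim0, Fin.elim0, le_rfl,
      fun t => t.elim0, fun x => by simp⟩
  | eq i j =>
    exact ⟨0, 1, Fin.elim0, Fin.elim0, fun _ => EQc, fun _ => i, fun _ => j, le_rfl,
      fun _ => .inl rfl, fun x => by simp⟩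
  | xor i j =>
    exact ⟨0, 1, Fin.elim0, Fin.elim0, fun _ => XORc, fun _ => i, fun _ => j, le_rfl,
      fun _ => .inr rfl, fun x => by simp⟩

theorem inED_iff_mem_closure [NeZero k] {f : Constraint k} :
    inED f ↔ f ∈ Submonoid.closure {g : Constraint k | IsEDFactor g} := by
  refine ⟨fun ⟨p, q, u, i, b, m, n, _, hb, hf⟩ => ?_, fun hf => ?_⟩
  · have hprod : f = (∏ s, fun x => u s (x (i s))) * ∏ s, fun x => b s (x (m s)) (x (n s)) := by
      ext x
      simp only [hf, Pi.mul_apply, Finset.prod_apply]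
    rw [hprod]
    refine mul_mem (prod_mem fun s _ => Submonoid.subset_closure (.unary _ _))
      (prod_mem fun s _ => Submonoid.subset_closure ?_)
    rcases hb s with hs | hs <;> rw [hs]
    exacts [.eq _ _, .xor _ _]
  · induction hf using Submonoid.closure_induction with
    | mem g hg => exact hg.inED
    | one => exact (IsEDFactor.unary (fun _ => 1) (0 : Fin k)).inED
    | mul g h _ _ hg hh => exact hg.mul hh

theorem inED_unary (u : Bool → ℂ) (i : Fin k) : inED fun x : Fin k → Bool => u (x i) :=
  (IsEDFactor.unary u i).inED

theorem inED_prod [NeZero k] {ι : Type*} {s : Finset ι} {F : ι → Constraint k}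
    (hF : ∀ t ∈ s, inED (F t)) : inED (∏ t ∈ s, F t) := by
  simp only [inED_iff_mem_closure] at hF ⊢
  exact prod_mem hF

theorem inED_const [NeZero k] (c : ℂ) : inED fun _ : Fin k → Bool => c :=
  inED_unary (fun _ => c) 0

open Classical in
theorem inED_indicator_respectsColumns [NeZero k] (R : Set (Fin k → Bool)) :
    inED fun x : Fin k → Bool => if RespectsColumns R x then (1 : ℂ) else 0 := by
  have hconst : inED (∏ p : Fin k × Bool, fun x : Fin k → Bool =>
      if (∀ r ∈ R, r p.1 = p.2) → x p.1 = p.2 then (1 : ℂ) else 0) :=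
    inED_prod fun p _ => inED_unary (fun b => if (∀ r ∈ R, r p.1 = p.2) → b = p.2 then 1 else 0) p.1
  have heq : inED (∏ p : Fin k × Fin k, fun x : Fin k → Bool =>
      if (∀ r ∈ R, r p.1 = r p.2) → x p.1 = x p.2 then (1 : ℂ) else 0) := by
    refine inED_prod fun p _ => ?_
    by_cases h : ∀ r ∈ R, r p.1 = r p.2
    · simpa only [imp_iff_right h, EQc] using (IsEDFactor.eq p.1 p.2).inED
    · simpa only [h, false_imp_iff, if_true] using inED_const (k := k) 1
  convert hconst.mul heq using 1
  ext x
  simp only [Pi.mul_apply, Finset.prod_apply, Fintype.prod_boole, Prod.forall,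
    ite_zero_mul_ite_zero, mul_one]
  congr

theorem inED_of_chainMultiplicative [NeZero k] {f : Constraint k} (hf : ChainMultiplicative f)
    (hR : IsSublattice f.support) : inED f := by
  classical
  rcases f.support.eq_empty_or_nonempty with hempty | hne
  · rw [Function.support_eq_empty_iff.1 hempty]
    exact inED_const 0
  obtain ⟨m, hm⟩ := exists_isLeast_of_infClosed hR.infClosed (Set.toFinite _) hne
  obtain ⟨A, hA⟩ := exists_isColumnAtoms hR.infClosed
  obtain ⟨T, hT⟩ := exists_isColumnTransversal f.support
  have hweights : inED (∏ i ∈ T, fun x : Fin k → Bool => columnWeight f m A i (x i)) :=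
    inED_prod fun i _ => inED_unary _ i
  convert ((inED_const (f m)).mul hweights).mul (inED_indicator_respectsColumns f.support)
  ext x
  simp only [Pi.mul_apply, Finset.prod_apply]
  split_ifs with hx
  · rw [mul_one, hf.eq_mul_prod_columnWeight hR hm hA hT hx]
  · rw [mul_zero]
    by_contra hfx
    exact hx (respectsColumns_of_mem hfx)

theorem inED.mul_eq_mul {h : Constraint 2} (hh : inED h) (h00 : h ![false, false] ≠ 0)
    (h01 : h ![false, true] ≠ 0) :
    h ![false, false] * h ![true, true] = h ![false, true] * h ![true, false] := by
  rw [inED_iff_mem_closure] at hh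
  induction hh using Submonoid.closure_induction with
  | mem g hg =>
    cases hg with
    | unary u i => fin_cases i <;> simp [mul_comm]
    | eq i j => fin_cases i <;> fin_cases j <;> simp_all [EQc]
    | xor i j => fin_cases i <;> fin_cases j <;> simp_all [XORc]
  | one => rfl
  | mul f g _ _ hf hg =>
    have hf' := hf (left_ne_zero_of_mul h00) (left_ne_zero_of_mul h01)
    have hg' := hg (right_ne_zero_of_mul h00) (right_ne_zero_of_mul h01)
    simp only [Pi.mul_apply]
    rw [mul_mul_mul_comm, hf', hg', mul_mul_mul_comm]

end EqualityDisequality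

section ImpSupport

variable {k : ℕ}

theorem hasImpSupport.neZero {f : Constraint k} (hf : hasImpSupport f) : NeZero k := by
  obtain ⟨L, hL, -⟩ := hf
  obtain ⟨fac, -⟩ := List.exists_mem_of_ne_nil L hL
  cases fac with
  | delta c i => exact ⟨i.pos.ne'⟩
  | imp i j => exact ⟨i.pos.ne'⟩

theorem ImpFactor.isSublattice_eval (fac : ImpFactor k) :
    IsSublattice {x | fac.eval x = true} := by
  cases fac <;> constructor <;> intro x hx y hy <;>
    grind [ImpFactor.eval, Pi.sup_apply, Pi.inf_apply, Bool.sup_eq_bor, Bool.inf_eq_band]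

theorem hasImpSupport.isSublattice_support {f : Constraint k} (hf : hasImpSupport f) :
    IsSublattice f.support := by
  obtain ⟨L, -, hL⟩ := hf
  have hsupport : f.support = ⋂ fac ∈ L, {x | fac.eval x = true} := by
    ext x
    simpa using! hL x
  rw [hsupport]
  exact isSublattice_iInter fun fac => isSublattice_iInter fun _ => fac.isSublattice_eval

theorem hasImpSupport_of_ne_zero {h : Constraint 2} (h00 : h ![false, false] ≠ 0)
    (h01 : h ![false, true] ≠ 0) (h11 : h ![true, true] ≠ 0) : hasImpSupport h := by
  have hvec (x : Fin 2 → Bool) : ∃ p q, x = ![p, q] := ⟨x 0, x 1, (FinVec.etaExpand_eq x).symm⟩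
  by_cases h10 : h ![true, false] = 0
  · refine ⟨[.imp 0 1], by simp, fun x => ?_⟩
    obtain ⟨p, q, rfl⟩ := hvec x
    cases p <;> cases q <;> simp [relOf, ImpFactor.eval, *]
  · refine ⟨[.imp 0 0], by simp, fun x => ?_⟩
    obtain ⟨p, q, rfl⟩ := hvec x
    cases p <;> cases q <;> simp [relOf, ImpFactor.eval, *]

/-- The substitution under which the assignments `00`, `01`, `11` run through the chain
`a ≤ b ≤ c`. -/
def chainSubst {ι : Type*} (a b c : ι → Bool) (x : Fin 2 → Bool) (t : ι) : Bool :=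
  if a t then true else if b t then x 1 else if c t then x 0 else false

theorem isSubstitution_chainSubst (a b c : Fin k → Bool) : IsSubstitution (chainSubst a b c) := by
  intro t
  unfold chainSubst
  split_ifs
  exacts [.inl ⟨true, fun _ => rfl⟩, .inr ⟨1, fun _ => rfl⟩, .inr ⟨0, fun _ => rfl⟩,
    .inl ⟨false, fun _ => rfl⟩]

section

variable {ι : Type*} {a b c : ι → Bool}

theorem chainSubst_false_false : chainSubst a b c ![false, false] = a := by
  ext t
  simp [chainSubst]

theorem chainSubst_false_true (hab : a ≤ b) : chainSubst a b c ![false, true] = b := by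
  ext t
  have htab : a t = true → b t = true := hab t
  cases ha : a t <;> cases hb : b t <;> simp_all [chainSubst]

theorem chainSubst_true_true (hab : a ≤ b) (hbc : b ≤ c) : chainSubst a b c ![true, true] = c := by
  ext t
  have htab : a t = true → b t = true := hab t
  have htbc : b t = true → c t = true := hbc t
  cases ha : a t <;> cases hb : b t <;> simp_all [chainSubst]

theorem chainSubst_true_false : chainSubst a b c ![true, false] = a ⊔ c \ b := by
  ext t
  cases ha : a t <;> cases hb : b t <;> simp_all [chainSubst, sdiff_eq]

end

end ImpSupport

theorem stmt19_general (k : ℕ) (f : Constraint k) (himp : hasImpSupport f) (hed : ¬ inED f) :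
    ∃ h : Constraint 2, hasImpSupport h ∧ ¬ inED h ∧
      TConNoProj ({⟨k, f⟩} : Set Ctr) ⟨2, h⟩ := by
  have : NeZero k := himp.neZero
  have hf : ¬ ChainMultiplicative f := fun hf =>
    hed (inED_of_chainMultiplicative hf himp.isSublattice_support)
  simp only [ChainMultiplicative, not_forall] at hf
  obtain ⟨a, b, c, hab, hbc, ha, hb, hc, hne⟩ := hf
  have h00 : f (chainSubst a b c ![false, false]) ≠ 0 := by rwa [chainSubst_false_false]
  have h01 : f (chainSubst a b c ![false, true]) ≠ 0 := by rwa [chainSubst_false_true hab]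
  have h11 : f (chainSubst a b c ![true, true]) ≠ 0 := by rwa [chainSubst_true_true hab hbc]
  refine ⟨fun x => f (chainSubst a b c x), hasImpSupport_of_ne_zero h00 h01 h11, fun hh => hne ?_,
    (TConNoProj.base (Set.mem_singleton _)).comp_substitution (isSubstitution_chainSubst a b c)⟩
  simpa only [chainSubst_false_false, chainSubst_false_true hab, chainSubst_true_true hab hbc,
    chainSubst_true_false] using hh.mul_eq_mul h00 h01

/-- For a constraint `f` of arity `k ≥ 3` in simple form, if `f` has imp
support and `f ∉ ED`, then there exists a constraint `h` of arity strictly less than `k`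
such that `h` has imp support, `h ∉ ED`, and `h` is T-constructible from `f`. -/
theorem stmt19 (k : ℕ) (hk : 3 ≤ k) (f : Constraint k) (hsf : simpleForm f)
    (himp : hasImpSupport f) (hed : ¬ inED f) :
    ∃ (k' : ℕ) (h : Constraint k'), k' < k ∧ hasImpSupport h ∧ ¬ inED h ∧
      TCon ({⟨k, f⟩} : Set Ctr) ⟨k', h⟩ := by
  obtain ⟨h, hhimp, hhed, hcon⟩ := stmt19_general k f himp hed
  exact ⟨2, h, hk, hhimp, hhed, hcon.toTCon⟩
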